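/- The property P(Φ,Ψ) — that the single-component amalgamation Φ+Ψ provides g-dinaturality — is decidable; it holds if and only if the left-hand side of the equation (cfnat), namely [R⟨1_C, f⟩] β(C,…,C) α(C,…,C) [T⟨f, 1_C⟩], reduces by D reduction to its right-hand side [R⟨f, 1_A⟩] β(A,…,A) α(A,…,A) [T⟨1_A, f⟩]. -/

import Mathlib

open CategoryTheory

universe u v

namespace GDin

/-! ### Graphs in the sense of the paper -/

/-- Vertices of a graph with `m` left-hand argument places, `n` right-hand argument
places and `g` auxiliary `G`-vertices. -/
abbrev Vtx (m n g : ℕ) := (Fin m ⊕ Fin n) ⊕ Fin g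

/-- The "same component" relation generated by a set of edges. -/
def Conn {V : Type*} (E : V → V → Prop) : V → V → Prop := Relation.EqvGen E

/-- A graph in the sense of the paper.  The sign (variance) functions `sL` (for the
left-hand argument places `x₁,…,x_m`) and `sR` (for the right-hand argument places
`y₁,…,y_n`) are parameters; `true` means positive (covariant), `false` negative.
The structure also carries the number `k` of connected components together with the
component classifier `π`. -/
structure GGraph (m n g : ℕ) (sL : Fin m → Bool) (sR : Fin n → Bool) : Type where
  edge : Vtx m n g → Vtx m n g → Prop
  symm : ∀ u v, edge u v → edge v u
  /-- condition 1: every vertex belongs to some edge -/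
  covered : ∀ v, ∃ w, edge v w
  /-- condition 2: an edge joins two left-hand argument places iff they have opposite
  signs and lie in the same component -/
  condX : ∀ i j : Fin m, edge (.inl (.inl i)) (.inl (.inl j)) ↔
    (sL i = !sL j ∧ Conn edge (.inl (.inl i)) (.inl (.inl j)))
  /-- condition 3 -/
  condY : ∀ i j : Fin n, edge (.inl (.inr i)) (.inl (.inr j)) ↔
    (sR i = !sR j ∧ Conn edge (.inl (.inr i)) (.inl (.inr j)))
  /-- condition 4 -/
  condXY : ∀ (i : Fin m) (j : Fin n), edge (.inl (.inl i)) (.inl (.inr j)) ↔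
    (sL i = sR j ∧ Conn edge (.inl (.inl i)) (.inl (.inr j)))
  /-- condition 5, first half: if a component contains an edge between two argument
  places then it contains no `G`-vertex -/
  condG₁ : ∀ v : Vtx m n g,
    (∃ u w : Fin m ⊕ Fin n, Conn edge (.inl u) v ∧ edge (.inl u) (.inl w)) →
      ∀ a : Fin g, ¬ Conn edge (.inr a) v
  /-- condition 5, second half: otherwise the component contains exactly one
  `G`-vertex -/
  condG₂ : ∀ v : Vtx m n g,
    (¬ ∃ u w : Fin m ⊕ Fin n, Conn edge (.inl u) v ∧ edge (.inl u) (.inl w)) →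
      ∃! a : Fin g, Conn edge (.inr a) v
  /-- condition 5: every other vertex of such a component is joined to the
  `G`-vertex by an edge -/
  condG₃ : ∀ (a : Fin g) (u : Fin m ⊕ Fin n),
    Conn edge (.inl u) (.inr a) → edge (.inl u) (.inr a)
  /-- the number of components -/
  k : ℕ
  /-- the component classifier -/
  π : Vtx m n g → Fin k
  π_surj : Function.Surjective π
  π_eq : ∀ u v, π u = π v ↔ Conn edge u v

namespace GGraph

variable {m n g : ℕ} {sL : Fin m → Bool} {sR : Fin n → Bool}

/-- component of the `i`-th left-hand argument place -/
def πL (Γ : GGraph m n g sL sR) (i : Fin m) : Fin Γ.k := Γ.π (.inl (.inl i))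

/-- component of the `j`-th right-hand argument place -/
def πR (Γ : GGraph m n g sL sR) (j : Fin n) : Fin Γ.k := Γ.π (.inl (.inr j))

end GGraph

/-! ### Variance-indexed categories and g-dinaturality -/

/-- `B` or `Bᵒᵖ` according to a variance. -/
def VarCat (B : Type u) [Category.{v} B] : Bool → Type u
  | true => B
  | false => Bᵒᵖ

instance (B : Type u) [Category.{v} B] : ∀ b, Category.{v} (VarCat B b)
  | true => (inferInstance : Category B)
  | false => (inferInstance : Category Bᵒᵖ)

variable {B : Type u} [Category.{v} B]

/-- The object of `B` or `Bᵒᵖ` with `P` at a positive argument place and `N` at a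
negative one. -/
def pairObj : (b : Bool) → B → B → VarCat B b
  | true, P, _ => P
  | false, _, N => Opposite.op N

/-- The morphism with `u` at a positive argument place and `v` (contravariantly) at a
negative one. -/
def pairHom : (b : Bool) → {P P' N N' : B} → (P ⟶ P') → (N' ⟶ N) →
    (pairObj b P N ⟶ pairObj b P' N')
  | true, _, _, _, _, u, _ => u
  | false, _, _, _, _, _, v => v.op

variable {ι : Type} {k : ℕ}

/-- The tuple of objects `⟨u,v⟩` with `u` in all positive and `v` in all negative
argument places. -/
@[reducible] def tupObj (s : ι → Bool) (P N : B) : ∀ i, VarCat B (s i) :=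
  fun i => pairObj (s i) P N

/-- The corresponding tuple of morphisms. -/
def tupHom (s : ι → Bool) {P P' N N' : B} (u : P ⟶ P') (v : N' ⟶ N) :
    (tupObj s P N ⟶ tupObj s P' N') :=
  fun i => pairHom (s i) u v

/-- The diagonal-like tuple of objects determined by an assignment of objects to
the components of a graph. -/
@[reducible] def diagObj (s : ι → Bool) (pl : ι → Fin k) (A : Fin k → B) :
    ∀ i, VarCat B (s i) :=
  fun i => pairObj (s i) (A (pl i)) (A (pl i))

/-- The tuple of objects obtained from the component assignment `A` by replacing the
value of component `c` by `P` at positive and `N` at negative argument places. -/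
def hexObj (s : ι → Bool) (pl : ι → Fin k) (c : Fin k) (A : Fin k → B) (P N : B) :
    ∀ i, VarCat B (s i) :=
  fun i => if pl i = c then pairObj (s i) P N else pairObj (s i) (A (pl i)) (A (pl i))

/-- The corresponding tuple of morphisms (identities outside component `c`). -/
def hexHom (s : ι → Bool) (pl : ι → Fin k) (c : Fin k) (A : Fin k → B)
    {P P' N N' : B} (u : P ⟶ P') (v : N' ⟶ N) :
    (hexObj s pl c A P N ⟶ hexObj s pl c A P' N') :=
  fun i => by
    unfold hexObj
    by_cases h : pl i = c
    · simp only [if_pos h]; exact pairHom (s i) u v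
    · simp only [if_neg h]; exact 𝟙 _

/-- update of a component assignment -/
def updF {γ : Type*} (A : Fin k → γ) (c : Fin k) (X : γ) : Fin k → γ :=
  fun j => if j = c then X else A j

theorem diag_upd (s : ι → Bool) (pl : ι → Fin k) (c : Fin k) (A : Fin k → B) (X : B) :
    diagObj s pl (updF A c X) = hexObj s pl c A X X := by
  funext i
  unfold diagObj hexObj updF
  by_cases h : pl i = c <;> simp [h]

/-- g-dinaturality of a transformation with respect to a graph: in every component
and for every morphism `f : P ⟶ Q` (all other components being kept fixed), the
g-dinaturality hexagon commutes. -/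
def IsGDin {m n gΓ : ℕ} {sL : Fin m → Bool} {sR : Fin n → Bool}
    (Γ : GGraph m n gΓ sL sR)
    (T : (∀ i : Fin m, VarCat B (sL i)) ⥤ B)
    (S : (∀ j : Fin n, VarCat B (sR j)) ⥤ B)
    (α : ∀ A : Fin Γ.k → B, T.obj (diagObj sL Γ.πL A) ⟶ S.obj (diagObj sR Γ.πR A)) :
    Prop :=
  ∀ (c : Fin Γ.k) (A : Fin Γ.k → B) (P Q : B) (f : P ⟶ Q),
    T.map (hexHom sL Γ.πL c A f (𝟙 Q)) ≫
      eqToHom (congrArg T.obj (diag_upd sL Γ.πL c A Q).symm) ≫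
      α (updF A c Q) ≫
      eqToHom (congrArg S.obj (diag_upd sR Γ.πR c A Q)) ≫
      S.map (hexHom sR Γ.πR c A (𝟙 Q) f)
    = T.map (hexHom sL Γ.πL c A (𝟙 P) f) ≫
      eqToHom (congrArg T.obj (diag_upd sL Γ.πL c A P).symm) ≫
      α (updF A c P) ≫
      eqToHom (congrArg S.obj (diag_upd sR Γ.πR c A P)) ≫
      S.map (hexHom sR Γ.πR c A f (𝟙 P))

/-- The g-dinaturality hexagon for a transformation whose graph has a single
component (so that only the signs of the argument places matter). -/
def SingleHex {ιx ιz : Type} (sx : ιx → Bool) (sz : ιz → Bool)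
    (F : (∀ i : ιx, VarCat B (sx i)) ⥤ B) (H : (∀ l : ιz, VarCat B (sz l)) ⥤ B)
    (φ : ∀ A : B, F.obj (tupObj sx A A) ⟶ H.obj (tupObj sz A A)) : Prop :=
  ∀ (P Q : B) (f : P ⟶ Q),
    F.map (tupHom sx f (𝟙 Q)) ≫ φ Q ≫ H.map (tupHom sz (𝟙 Q) f)
    = F.map (tupHom sx (𝟙 P) f) ≫ φ P ≫ H.map (tupHom sz f (𝟙 P))

section Amalg

variable {m n p gΦ gΨ : ℕ} {sx : Fin m → Bool} {sy : Fin n → Bool} {sz : Fin p → Bool}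

/-- Vertices of the amalgamation `Φ+Ψ` of two graphs sharing their `y` argument
places. -/
abbrev AVtx (m n p gΦ gΨ : ℕ) := (Fin m ⊕ Fin n ⊕ Fin p) ⊕ (Fin gΦ ⊕ Fin gΨ)

/-- inclusion of the vertices of `Φ` into the amalgamation -/
def phiInc : Vtx m n gΦ → AVtx m n p gΦ gΨ
  | .inl (.inl i) => .inl (.inl i)
  | .inl (.inr j) => .inl (.inr (.inl j))
  | .inr a => .inr (.inl a)

/-- inclusion of the vertices of `Ψ` into the amalgamation -/
def psiInc : Vtx n p gΨ → AVtx m n p gΦ gΨ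
  | .inl (.inl j) => .inl (.inr (.inl j))
  | .inl (.inr l) => .inl (.inr (.inr l))
  | .inr a => .inr (.inr a)

/-- The edges of the amalgamation `Φ+Ψ`, tagged (`true` for `Φ`-edges, `false` for
`Ψ`-edges); the edge sets are kept disjoint via the tag. -/
def amEdge (Φ : GGraph m n gΦ sx sy) (Ψ : GGraph n p gΨ sy sz) :
    Bool → AVtx m n p gΦ gΨ → AVtx m n p gΦ gΨ → Prop
  | true, u, v => ∃ u' v', Φ.edge u' v' ∧ phiInc u' = u ∧ phiInc v' = v
  | false, u, v => ∃ u' v', Ψ.edge u' v' ∧ psiInc u' = u ∧ psiInc v' = v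

/-- `Φ+Ψ` has a single (connected) component. -/
def AmalgConnected (Φ : GGraph m n gΦ sx sy) (Ψ : GGraph n p gΨ sy sz) : Prop :=
  ∀ u v : AVtx m n p gΦ gΨ,
    Conn (fun a b => amEdge Φ Ψ true a b ∨ amEdge Φ Ψ false a b) u v

/-- There is an alternating loop in `Φ+Ψ`: a closed alternating chain, i.e. a cyclic
sequence of vertices joined by edges of `Φ+Ψ` such that of any two adjacent edges one
belongs to `E_Φ` and the other to `E_Ψ`. -/
def HasAltLoop (Φ : GGraph m n gΦ sx sy) (Ψ : GGraph n p gΨ sy sz) : Prop :=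
  ∃ (q : ℕ) (vs : ℕ → AVtx m n p gΦ gΨ) (sd : ℕ → Bool),
    0 < q ∧ vs 0 = vs q ∧
    (∀ t, t < q → amEdge Φ Ψ (sd t) (vs t) (vs (t + 1))) ∧
    (∀ t, t + 1 < q → sd t ≠ sd (t + 1))

/-- `Φ+Ψ` provides g-dinaturality: for every category, all functors of the types
prescribed by the signs of the argument places and all g-dinatural `γ`, `δ` with
graphs `Φ`, `Ψ`, the composite family is g-dinatural with the (single-component)
composite graph `ΨΦ`, i.e. the composite hexagon commutes.  (For a
single-component graph, g-dinaturality depends only on the signs of the argument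
places.) -/
def Provides (Φ : GGraph m n gΦ sx sy) (Ψ : GGraph n p gΨ sy sz) : Prop :=
  ∀ {B : Type u} [Category.{v} B]
    (F : (∀ i : Fin m, VarCat B (sx i)) ⥤ B)
    (G : (∀ j : Fin n, VarCat B (sy j)) ⥤ B)
    (H : (∀ l : Fin p, VarCat B (sz l)) ⥤ B)
    (γ : ∀ A : Fin Φ.k → B, F.obj (diagObj sx Φ.πL A) ⟶ G.obj (diagObj sy Φ.πR A))
    (δ : ∀ A : Fin Ψ.k → B, G.obj (diagObj sy Ψ.πL A) ⟶ H.obj (diagObj sz Ψ.πR A)),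
    IsGDin Φ F G γ → IsGDin Ψ G H δ →
    SingleHex sx sz F H (fun A => γ (fun _ => A) ≫ δ (fun _ => A))

end Amalg

/-! ### The set `ℳ₀` of `CF`-normal terms of `ℳ`, and `D` reduction -/

/-- the possible arguments `1_A`, `1_C`, `f` of `T`, `S`, `R` in a term of `ℳ₀` -/
inductive MArg : Type
  | idA : MArg
  | idC : MArg
  | ff : MArg
deriving DecidableEq

section MZsec
variable {m n p gΦ gΨ : ℕ} {sx : Fin m → Bool} {sy : Fin n → Bool} {sz : Fin p → Bool}

/-- A term of `ℳ₀`, i.e. a `CF`-normal form `[R(t⃗)] β(Y⃗) [S(h⃗)] α(X⃗) [T(g⃗)]` of a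
term of `ℳ`, of type `T⟨A,C⟩ → R⟨C,A⟩`.  Such a term is completely determined by the
tuples `X⃗` and `Y⃗` of objects from `{A, C}` (here `true` codes `C` and `false`
codes `A`), subject to the typing (compatibility) condition below; the argument
vectors `g⃗`, `h⃗`, `t⃗` are then recovered by `MZ.g`, `MZ.h`, `MZ.t`. -/
structure MZ (Φ : GGraph m n gΦ sx sy) (Ψ : GGraph n p gΨ sy sz) : Type where
  Xv : Fin Φ.k → Bool
  Yv : Fin Ψ.k → Bool
  compat : ∀ j : Fin n,
    (sy j = true → ¬(Xv (Φ.πR j) = true ∧ Yv (Ψ.πL j) = false)) ∧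
    (sy j = false → ¬(Yv (Ψ.πL j) = true ∧ Xv (Φ.πR j) = false))

variable {Φ : GGraph m n gΦ sx sy} {Ψ : GGraph n p gΨ sy sz}

/-- the argument of `T` at the place `x_i` -/
def MZ.g (z : MZ Φ Ψ) (i : Fin m) : MArg :=
  if sx i then (if z.Xv (Φ.πL i) then .ff else .idA)
  else (if z.Xv (Φ.πL i) then .idC else .ff)

/-- the argument of `S` at the place `y_j` -/
def MZ.h (z : MZ Φ Ψ) (j : Fin n) : MArg :=
  if sy j then
    (if z.Xv (Φ.πR j) then .idC else if z.Yv (Ψ.πL j) then .ff else .idA)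
  else
    (if z.Yv (Ψ.πL j) then .idC else if z.Xv (Φ.πR j) then .ff else .idA)

/-- the argument of `R` at the place `z_l` -/
def MZ.t (z : MZ Φ Ψ) (l : Fin p) : MArg :=
  if sz l then (if z.Yv (Ψ.πR l) then .idC else .ff)
  else (if z.Yv (Ψ.πR l) then .ff else .idA)

/-- the argument occupying a (left- or right-hand) argument place of `Φ` -/
def MZ.occPhi (z : MZ Φ Ψ) : Fin m ⊕ Fin n → MArg := Sum.elim z.g z.h

/-- the argument occupying a (left- or right-hand) argument place of `Ψ` -/
def MZ.occPsi (z : MZ Φ Ψ) : Fin n ⊕ Fin p → MArg := Sum.elim z.h z.t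

/-- One step of `D` reduction on the set `ℳ₀`, applied to the entire term: an
`(α_i)`-step replaces the `i`-th argument `C` of `α` by `A`, provided all the
arguments `g_j` with `x_j ∈ Φ_i⁺` and all the arguments `h_j` with `y_j ∈ Φ_i⁻`
are `f`; the affected arguments are updated accordingly (which, the terms of `ℳ₀`
being determined by `X⃗` and `Y⃗`, is captured by updating `X⃗`).  `(β_i)`-steps are
analogous. -/
inductive DStep : MZ Φ Ψ → MZ Φ Ψ → Prop
  | alphaStep (z z' : MZ Φ Ψ) (i : Fin Φ.k) :
      z.Xv i = true →
      (∀ j : Fin m, sx j = true → Φ.πL j = i → z.g j = .ff) →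
      (∀ j : Fin n, sy j = false → Φ.πR j = i → z.h j = .ff) →
      z'.Xv = Function.update z.Xv i false →
      z'.Yv = z.Yv →
      DStep z z'
  | betaStep (z z' : MZ Φ Ψ) (i : Fin Ψ.k) :
      z.Yv i = true →
      (∀ j : Fin n, sy j = true → Ψ.πL j = i → z.h j = .ff) →
      (∀ l : Fin p, sz l = false → Ψ.πR l = i → z.t l = .ff) →
      z'.Yv = Function.update z.Yv i false →
      z'.Xv = z.Xv →
      DStep z z'

/-- a term of `ℳ₀` is in `D` normal form -/
def DNormal (z : MZ Φ Ψ) : Prop := ¬ ∃ z', DStep z z'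

end MZsec

section Nat7
variable {m n p gΦ gΨ : ℕ} {sx : Fin m → Bool} {sy : Fin n → Bool} {sz : Fin p → Bool}
variable (Φ : GGraph m n gΦ sx sy) (Ψ : GGraph n p gΨ sy sz)

/-- the left-hand side of the equation `(cfnat)`, as a term of `ℳ₀`:
`[R⟨1_C,f⟩] β(C,…,C) α(C,…,C) [T⟨f,1_C⟩]` -/
def cfnatLHS : MZ Φ Ψ :=
  ⟨fun _ => true, fun _ => true, fun _ => by simp⟩

/-- the right-hand side of the equation `(cfnat)`, as a term of `ℳ₀`:
`[R⟨f,1_A⟩] β(A,…,A) α(A,…,A) [T⟨1_A,f⟩]` -/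
def cfnatRHS : MZ Φ Ψ :=
  ⟨fun _ => false, fun _ => false, fun _ => by simp⟩

end Nat7

section Interp

/-- The objects `A`, `C` coded by Booleans. -/
@[reducible] def VV (P Q : B) : Bool → B
  | true => Q
  | false => P

/-- The morphisms `1_A`, `f`, `1_C`. -/
def vm {P Q : B} (f : P ⟶ Q) : (x y : Bool) → (x ≤ y) → (VV P Q x ⟶ VV P Q y)
  | false, false, _ => 𝟙 P
  | false, true, _ => f
  | true, true, _ => 𝟙 Q
  | true, false, h => absurd h (by decide)

/-- Order reversed at negative places. -/
def jle (b x y : Bool) : Prop := if b then x ≤ y else y ≤ x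

theorem jle_trans {b x y z : Bool} (h : jle b x y) (h' : jle b y z) : jle b x z := by
  revert h h'; cases b <;> cases x <;> cases y <;> cases z <;> simp [jle]

theorem jle_refl (b x : Bool) : jle b x x := by
  cases b <;> simp [jle]

/-- A single coordinate of a tuple of morphisms. -/
def jm {P Q : B} (f : P ⟶ Q) : (b x y : Bool) → jle b x y →
    (pairObj b (VV P Q x) (VV P Q x) ⟶ pairObj b (VV P Q y) (VV P Q y))
  | true, x, y, h => vm f x y h
  | false, x, y, h => (vm f y x h).op

theorem vm_refl {P Q : B} (f : P ⟶ Q) (x : Bool) (h : x ≤ x) : vm f x x h = 𝟙 _ := by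
  cases x <;> rfl

theorem vm_comp {P Q : B} (f : P ⟶ Q) (x y z : Bool) (h : x ≤ y) (h' : y ≤ z) :
    vm f x y h ≫ vm f y z h' = vm f x z (h.trans h') := by
  cases x <;> cases y <;> cases z <;>
    first
      | exact absurd h (by decide)
      | exact absurd h' (by decide)
      | simp [vm]

theorem jm_refl {P Q : B} (f : P ⟶ Q) (b x : Bool) (h : jle b x x) : jm f b x x h = 𝟙 _ := by
  cases b
  · exact congrArg Quiver.Hom.op (vm_refl f x h)
  · exact vm_refl f x h

theorem jm_comp {P Q : B} (f : P ⟶ Q) (b x y z : Bool) (h : jle b x y) (h' : jle b y z) :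
    jm f b x y h ≫ jm f b y z h' = jm f b x z (jle_trans h h') := by
  cases b
  · exact congrArg Quiver.Hom.op (vm_comp f z y x h' h)
  · exact vm_comp f x y z h h'

@[reducible] def Jobj (P Q : B) (s : ι → Bool) (b : ι → Bool) : ∀ i, VarCat B (s i) :=
  fun i => pairObj (s i) (VV P Q (b i)) (VV P Q (b i))

def Jhom {P Q : B} (f : P ⟶ Q) (s : ι → Bool) (b b' : ι → Bool)
    (h : ∀ i, jle (s i) (b i) (b' i)) : Jobj P Q s b ⟶ Jobj P Q s b' :=
  fun i => jm f (s i) (b i) (b' i) (h i)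

theorem Jhom_refl {P Q : B} (f : P ⟶ Q) (s : ι → Bool) (b : ι → Bool)
    (h : ∀ i, jle (s i) (b i) (b i)) : Jhom f s b b h = 𝟙 _ := by
  funext i
  exact jm_refl f _ _ _

theorem Jhom_comp {P Q : B} (f : P ⟶ Q) (s : ι → Bool) (b b' b'' : ι → Bool)
    (h : ∀ i, jle (s i) (b i) (b' i)) (h' : ∀ i, jle (s i) (b' i) (b'' i)) :
    Jhom f s b b' h ≫ Jhom f s b' b'' h' = Jhom f s b b'' (fun i => jle_trans (h i) (h' i)) := by
  funext i
  exact jm_comp f _ _ _ _ _ _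

theorem pi_eqToHom {s : ι → Bool} {X Y : ∀ i : ι, VarCat B (s i)} (h : X = Y) (i : ι) :
    (eqToHom h) i = eqToHom (congrFun h i) := by
  subst h; rfl

/-- Boolean code of the tuple `hexObj`. -/
def hexb (s : ι → Bool) (pl : ι → Fin k) (c : Fin k) (X : Fin k → Bool) (x y : Bool) : ι → Bool :=
  fun i => if pl i = c then (if s i then x else y) else X (pl i)

theorem hexb_obj {P Q : B} (s : ι → Bool) (pl : ι → Fin k) (c : Fin k) (X : Fin k → Bool)
    (x y : Bool) (b : ι → Bool) (hb : b = hexb s pl c X x y) :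
    Jobj P Q s b =
      hexObj s pl c (fun j => VV P Q (X j)) (VV P Q x) (VV P Q y) := by
  subst hb
  funext i
  unfold Jobj hexObj hexb
  by_cases h : pl i = c
  · simp only [if_pos h]
    cases s i <;> rfl
  · simp only [if_neg h]

theorem pair_heq {P Q : B} (f : P ⟶ Q) (b x y x' y' w w' : Bool) (hx : x ≤ x') (hy : y' ≤ y)
    (h : jle b w w') (hw : w = if b then x else y) (hw' : w' = if b then x' else y') :
    HEq (pairHom b (vm f x x' hx) (vm f y' y hy)) (jm f b w w' h) := by
  subst hw hw'
  cases b <;> exact HEq.rfl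

theorem hexHom_heq_pos (s : ι → Bool) (pl : ι → Fin k) (c : Fin k) (A : Fin k → B)
    {P P' N N' : B} (u : P ⟶ P') (v : N' ⟶ N) (i : ι) (h : pl i = c) :
    HEq (hexHom s pl c A u v i) (pairHom (s i) u v) := by
  unfold hexHom
  simp only [h, dite_true]
  simp only [eq_mpr_eq_cast, id]
  exact cast_heq _ _

theorem hexHom_heq_neg (s : ι → Bool) (pl : ι → Fin k) (c : Fin k) (A : Fin k → B)
    {P P' N N' : B} (u : P ⟶ P') (v : N' ⟶ N) (i : ι) (h : ¬ pl i = c) :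
    HEq (hexHom s pl c A u v i) (𝟙 (pairObj (s i) (A (pl i)) (A (pl i)))) := by
  unfold hexHom
  simp only [h, dite_false]
  simp only [eq_mpr_eq_cast, id]
  exact cast_heq _ _

theorem jm_id_heq {P Q : B} (f : P ⟶ Q) (b x w w' : Bool) (h : jle b w w')
    (hw : w = x) (hw' : w' = x) :
    HEq (𝟙 (pairObj b (VV P Q x) (VV P Q x))) (jm f b w w' h) := by
  subst hw hw'
  rw [jm_refl]

theorem Jhom_hex {P Q : B} (f : P ⟶ Q) (s : ι → Bool) (pl : ι → Fin k) (c : Fin k)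
    (X : Fin k → Bool) (x y x' y' : Bool) (hx : x ≤ x') (hy : y' ≤ y)
    (b b' : ι → Bool) (hb : b = hexb s pl c X x y) (hb' : b' = hexb s pl c X x' y')
    (h : ∀ i, jle (s i) (b i) (b' i)) :
    Jhom f s b b' h = eqToHom (hexb_obj s pl c X x y b hb) ≫
      hexHom s pl c (fun j => VV P Q (X j)) (vm f x x' hx) (vm f y' y hy) ≫
      eqToHom (hexb_obj s pl c X x' y' b' hb').symm := by
  funext i
  simp only [Pi.comp_apply, pi_eqToHom]
  apply eq_of_heq
  symm
  rw [eqToHom_comp_heq_iff, comp_eqToHom_heq_iff]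
  by_cases hc : pl i = c
  · refine (hexHom_heq_pos s pl c _ _ _ i hc).trans ?_
    apply pair_heq
    · simp [hb, hexb, hc]
    · simp [hb', hexb, hc]
  · refine (hexHom_heq_neg s pl c _ _ _ i hc).trans ?_
    apply jm_id_heq
    · simp [hb, hexb, hc]
    · simp [hb', hexb, hc]

theorem tupHom_eq {P Q : B} (f : P ⟶ Q) (s : ι → Bool) (x y x' y' : Bool) (hx : x ≤ x')
    (hy : y' ≤ y) (b b' : ι → Bool) (hb : b = fun i => if s i then x else y)
    (hb' : b' = fun i => if s i then x' else y')
    (h : ∀ i, jle (s i) (b i) (b' i))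
    (e : tupObj s (VV P Q x) (VV P Q y) = Jobj P Q s b)
    (e' : Jobj P Q s b' = tupObj s (VV P Q x') (VV P Q y')) :
    tupHom s (vm f x x' hx) (vm f y' y hy) = eqToHom e ≫ Jhom f s b b' h ≫ eqToHom e' := by
  funext i
  simp only [Pi.comp_apply, pi_eqToHom]
  apply eq_of_heq
  symm
  rw [eqToHom_comp_heq_iff, comp_eqToHom_heq_iff]
  symm
  apply pair_heq
  · simp [hb]
  · simp [hb']

theorem tupObj_eq (P Q : B) (s : ι → Bool) (x y : Bool) (b : ι → Bool)
    (hb : b = fun i => if s i then x else y) :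
    tupObj s (VV P Q x) (VV P Q y) = Jobj P Q s b := by
  subst hb
  funext i
  unfold tupObj Jobj
  simp only
  cases s i <;> rfl

theorem alpha_congr {m n : ℕ} {sL : Fin m → Bool} {sR : Fin n → Bool}
    {pL : Fin m → Fin k} {pR : Fin n → Fin k}
    {T : (∀ i : Fin m, VarCat B (sL i)) ⥤ B}
    {S : (∀ j : Fin n, VarCat B (sR j)) ⥤ B}
    (α : ∀ A : Fin k → B, T.obj (diagObj sL pL A) ⟶ S.obj (diagObj sR pR A))
    {A A' : Fin k → B} (h : A = A') :
    α A = eqToHom (by rw [h]) ≫ α A' ≫ eqToHom (by rw [h]) := by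
  subst h; simp

theorem gdinJ {m n gΓ : ℕ} {sL : Fin m → Bool} {sR : Fin n → Bool}
    (Γ : GGraph m n gΓ sL sR)
    (T : (∀ i : Fin m, VarCat B (sL i)) ⥤ B)
    (S : (∀ j : Fin n, VarCat B (sR j)) ⥤ B)
    (α : ∀ A : Fin Γ.k → B, T.obj (diagObj sL Γ.πL A) ⟶ S.obj (diagObj sR Γ.πR A))
    (hα : IsGDin Γ T S α) {P Q : B} (f : P ⟶ Q) (c : Fin Γ.k) (X X' : Fin Γ.k → Bool)
    (hX : X c = true) (hX' : X' = Function.update X c false)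
    (bL : Fin m → Bool) (bR : Fin n → Bool)
    (hL : ∀ i, jle (sL i) (bL i) (hexb sL Γ.πL c X false true i))
    (hR : ∀ i, jle (sR i) (hexb sR Γ.πR c X true false i) (bR i))
    (h1 : ∀ i, jle (sL i) (bL i) (X (Γ.πL i)))
    (h2 : ∀ i, jle (sR i) (X (Γ.πR i)) (bR i))
    (h3 : ∀ i, jle (sL i) (bL i) (X' (Γ.πL i)))
    (h4 : ∀ i, jle (sR i) (X' (Γ.πR i)) (bR i)) :
    T.map (Jhom f sL bL (fun i => X (Γ.πL i)) h1) ≫ α (fun j => VV P Q (X j)) ≫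
      S.map (Jhom f sR (fun i => X (Γ.πR i)) bR h2) =
    T.map (Jhom f sL bL (fun i => X' (Γ.πL i)) h3) ≫ α (fun j => VV P Q (X' j)) ≫
      S.map (Jhom f sR (fun i => X' (Γ.πR i)) bR h4) := by
  have key := hα c (fun j => VV P Q (X j)) P Q f
  have eL1 : (fun i => X (Γ.πL i)) = hexb sL Γ.πL c X true true := by
    funext i; by_cases h : Γ.πL i = c <;> simp [hexb, h, hX]
  have eR1 : (fun i => X (Γ.πR i)) = hexb sR Γ.πR c X true true := by
    funext i; by_cases h : Γ.πR i = c <;> simp [hexb, h, hX]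
  have eL0 : (fun i => X' (Γ.πL i)) = hexb sL Γ.πL c X false false := by
    funext i; by_cases h : Γ.πL i = c <;> simp [hexb, h, hX']
  have eR0 : (fun i => X' (Γ.πR i)) = hexb sR Γ.πR c X false false := by
    funext i; by_cases h : Γ.πR i = c <;> simp [hexb, h, hX']
  have eA1 : (fun j => VV P Q (X j)) = updF (fun j => VV P Q (X j)) c Q := by
    funext i; by_cases h : i = c <;> simp [updF, h, hX]
  have eA0 : (fun j => VV P Q (X' j)) = updF (fun j => VV P Q (X j)) c P := by
    funext i; by_cases h : i = c <;> simp [updF, h, hX']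
  have jL1 : ∀ i, jle (sL i) (hexb sL Γ.πL c X false true i) (X (Γ.πL i)) := by
    intro i; by_cases h : Γ.πL i = c <;> cases hs : sL i <;> simp [hexb, h, hX, hs, jle]
  have jL0 : ∀ i, jle (sL i) (hexb sL Γ.πL c X false true i) (X' (Γ.πL i)) := by
    intro i; by_cases h : Γ.πL i = c <;> cases hs : sL i <;>
      simp [hexb, h, hX', hs, jle]
  have jR1 : ∀ i, jle (sR i) (X (Γ.πR i)) (hexb sR Γ.πR c X true false i) := by
    intro i; by_cases h : Γ.πR i = c <;> cases hs : sR i <;> simp [hexb, h, hX, hs, jle]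
  have jR0 : ∀ i, jle (sR i) (X' (Γ.πR i)) (hexb sR Γ.πR c X true false i) := by
    intro i; by_cases h : Γ.πR i = c <;> cases hs : sR i <;>
      simp [hexb, h, hX', hs, jle]
  rw [← Jhom_comp f sL bL _ _ hL jL1, ← Jhom_comp f sL bL _ _ hL jL0,
    ← Jhom_comp f sR _ _ bR jR1 hR, ← Jhom_comp f sR _ _ bR jR0 hR,
    Jhom_hex f sL Γ.πL c X false true true true (by decide) (by decide) _ _ rfl eL1 jL1,
    Jhom_hex f sL Γ.πL c X false true false false (by decide) (by decide) _ _ rfl eL0 jL0,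
    Jhom_hex f sR Γ.πR c X true true true false (by decide) (by decide) _ _ eR1 rfl jR1,
    Jhom_hex f sR Γ.πR c X false false true false (by decide) (by decide) _ _ eR0 rfl jR0,
    alpha_congr α eA1, alpha_congr α eA0]
  simp only [Functor.map_comp, eqToHom_map, Category.assoc, eqToHom_trans_assoc]
  refine congrArg (fun t => T.map _ ≫ eqToHom _ ≫ t) ?_
  have := congrArg (fun t => t ≫ eqToHom (congrArg S.obj
    (hexb_obj (P := P) (Q := Q) sR Γ.πR c X true false _ rfl).symm) ≫ S.map (Jhom f sR _ bR hR)) key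
  simp only [Category.assoc] at this
  exact this

end Interp


section Reduces

variable {m n p gΦ gΨ : ℕ} {sx : Fin m → Bool} {sy : Fin n → Bool} {sz : Fin p → Bool}
variable {Φ : GGraph m n gΦ sx sy} {Ψ : GGraph n p gΨ sy sz}

theorem MZ.jle_x (z : MZ Φ Ψ) (i : Fin m) : jle (sx i) (!sx i) (z.Xv (Φ.πL i)) := by
  cases sx i <;> simp [jle]

theorem MZ.jle_z (z : MZ Φ Ψ) (l : Fin p) : jle (sz l) (z.Yv (Ψ.πR l)) (sz l) := by
  cases sz l <;> simp [jle]

theorem MZ.jle_y (z : MZ Φ Ψ) (j : Fin n) :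
    jle (sy j) (z.Xv (Φ.πR j)) (z.Yv (Ψ.πL j)) := by
  have := z.compat j
  revert this
  cases sy j <;> cases z.Xv (Φ.πR j) <;> cases z.Yv (Ψ.πL j) <;> simp [jle]

/-- The interpretation of a term of `ℳ₀`. -/
def MZ.interp (F : (∀ i : Fin m, VarCat B (sx i)) ⥤ B)
    (G : (∀ j : Fin n, VarCat B (sy j)) ⥤ B)
    (H : (∀ l : Fin p, VarCat B (sz l)) ⥤ B)
    (γ : ∀ A : Fin Φ.k → B, F.obj (diagObj sx Φ.πL A) ⟶ G.obj (diagObj sy Φ.πR A))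
    (δ : ∀ A : Fin Ψ.k → B, G.obj (diagObj sy Ψ.πL A) ⟶ H.obj (diagObj sz Ψ.πR A))
    {P Q : B} (f : P ⟶ Q) (z : MZ Φ Ψ) :
    F.obj (Jobj P Q sx (fun i => !sx i)) ⟶ H.obj (Jobj P Q sz sz) :=
  F.map (Jhom f sx (fun i => !sx i) (fun i => z.Xv (Φ.πL i)) z.jle_x) ≫
    γ (fun c => VV P Q (z.Xv c)) ≫
    G.map (Jhom f sy (fun j => z.Xv (Φ.πR j)) (fun j => z.Yv (Ψ.πL j)) z.jle_y) ≫
    δ (fun c => VV P Q (z.Yv c)) ≫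
    H.map (Jhom f sz (fun l => z.Yv (Ψ.πR l)) sz z.jle_z)

theorem interp_step (F : (∀ i : Fin m, VarCat B (sx i)) ⥤ B)
    (G : (∀ j : Fin n, VarCat B (sy j)) ⥤ B)
    (H : (∀ l : Fin p, VarCat B (sz l)) ⥤ B)
    (γ : ∀ A : Fin Φ.k → B, F.obj (diagObj sx Φ.πL A) ⟶ G.obj (diagObj sy Φ.πR A))
    (δ : ∀ A : Fin Ψ.k → B, G.obj (diagObj sy Ψ.πL A) ⟶ H.obj (diagObj sz Ψ.πR A))
    (hγ : IsGDin Φ F G γ) (hδ : IsGDin Ψ G H δ)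
    {P Q : B} (f : P ⟶ Q) (z z' : MZ Φ Ψ) (h : DStep z z') :
    z.interp F G H γ δ f = z'.interp F G H γ δ f := by
  cases h with
  | alphaStep i hi hg hh hX hY =>
    obtain ⟨X, Y, cz⟩ := z
    obtain ⟨X', Y', cz'⟩ := z'
    simp only at hi hX hY
    subst hY
    have key := gdinJ Φ F G γ hγ f i X X' hi hX (fun i => !sx i) (fun j => Y' (Ψ.πL j))
      (by
        intro j
        by_cases hj : Φ.πL j = i <;> cases hs : sx j <;> simp [hexb, hj, hs, jle])
      (by
        intro j
        have h1 := hh j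
        have h2 := MZ.jle_y ⟨X, Y', cz⟩ j
        by_cases hj : Φ.πR j = i
        · revert h1 h2
          simp only [MZ.h, hexb, hj, hi, if_true]
          cases sy j <;> cases Y' (Ψ.πL j) <;> simp [jle]
        · simpa [hexb, hj] using h2)
      (MZ.jle_x ⟨X, Y', cz⟩) (MZ.jle_y ⟨X, Y', cz⟩) (MZ.jle_x ⟨X', Y', cz'⟩)
      (MZ.jle_y ⟨X', Y', cz'⟩)
    have := congrArg (fun t => t ≫ δ (fun c => VV P Q (Y' c)) ≫
      H.map (Jhom f sz (fun l => Y' (Ψ.πR l)) sz (MZ.jle_z ⟨X, Y', cz⟩))) key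
    simp only [Category.assoc] at this
    exact this
  | betaStep i hi hh ht hY hX =>
    obtain ⟨X, Y, cz⟩ := z
    obtain ⟨X', Y', cz'⟩ := z'
    simp only at hi hX hY
    subst hX
    have key := gdinJ Ψ G H δ hδ f i Y Y' hi hY (fun j => X' (Φ.πR j)) sz
      (by
        intro j
        have h1 := hh j
        have h2 := MZ.jle_y ⟨X', Y, cz⟩ j
        by_cases hj : Ψ.πL j = i
        · revert h1 h2
          simp only [MZ.h, hexb, hj, hi, if_true]
          cases sy j <;> cases X' (Φ.πR j) <;> simp [jle]
        · simpa [hexb, hj] using h2)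
      (by
        intro j
        by_cases hj : Ψ.πR j = i <;> cases hs : sz j <;> simp [hexb, hj, hs, jle])
      (MZ.jle_y ⟨X', Y, cz⟩) (MZ.jle_z ⟨X', Y, cz⟩) 
      (MZ.jle_y ⟨X', Y', cz'⟩) (MZ.jle_z ⟨X', Y', cz'⟩)
    have := congrArg (fun t => F.map (Jhom f sx (fun i => !sx i) (fun i => X' (Φ.πL i))
      (MZ.jle_x ⟨X', Y, cz⟩)) ≫ γ (fun c => VV P Q (X' c)) ≫ t) key
    exact this

/-! ### Stuck configurations -/

/-- every element of `K` is blocked by an element of `K` -/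
def Blocked (Φ : GGraph m n gΦ sx sy) (Ψ : GGraph n p gΨ sy sz)
    (K : Finset (Fin Φ.k ⊕ Fin Ψ.k)) : Prop :=
  K.Nonempty ∧
  (∀ c, .inl c ∈ K → ∃ j, sy j = false ∧ Φ.πR j = c ∧ .inr (Ψ.πL j) ∈ K) ∧
  (∀ d, .inr d ∈ K → ∃ j, sy j = true ∧ Ψ.πL j = d ∧ .inl (Φ.πR j) ∈ K)

/-- every element of `K` blocks an element of `K` -/
def Blocking (Φ : GGraph m n gΦ sx sy) (Ψ : GGraph n p gΨ sy sz)
    (K : Finset (Fin Φ.k ⊕ Fin Ψ.k)) : Prop :=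
  (∀ c, .inl c ∈ K → ∃ j, sy j = true ∧ Φ.πR j = c ∧ .inr (Ψ.πL j) ∈ K) ∧
  (∀ d, .inr d ∈ K → ∃ j, sy j = false ∧ Ψ.πL j = d ∧ .inl (Φ.πR j) ∈ K)

theorem exists_blocking (K : Finset (Fin Φ.k ⊕ Fin Ψ.k)) (hK : Blocked Φ Ψ K) :
    ∃ K', Blocked Φ Ψ K' ∧ Blocking Φ Ψ K' := by
  induction K using Finset.strongInduction with
  | H K ih =>
    by_cases hb : Blocking Φ Ψ K
    · exact ⟨K, hK, hb⟩
    · obtain ⟨hne, hl, hr⟩ := hK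
      rw [Blocking, not_and_or] at hb
      rcases hb with hb | hb
      · push Not at hb
        obtain ⟨c, hc, hcn⟩ := hb
        refine ih (K.erase (.inl c)) (Finset.erase_ssubset hc) ⟨?_, ?_, ?_⟩
        · obtain ⟨j, -, -, hj⟩ := hl c hc
          exact ⟨_, Finset.mem_erase.2 ⟨by simp, hj⟩⟩
        · intro c' hc'
          obtain ⟨j, h1, h2, hj⟩ := hl c' (Finset.mem_of_mem_erase hc')
          exact ⟨j, h1, h2, Finset.mem_erase.2 ⟨by simp, hj⟩⟩
        · intro d hd
          obtain ⟨j, h1, h2, hj⟩ := hr d (Finset.mem_of_mem_erase hd)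
          refine ⟨j, h1, h2, Finset.mem_erase.2 ⟨?_, hj⟩⟩
          intro he
          refine hcn j h1 (Sum.inl.inj he) ?_
          rw [h2]; exact Finset.mem_of_mem_erase hd
      · push Not at hb
        obtain ⟨c, hc, hcn⟩ := hb
        refine ih (K.erase (.inr c)) (Finset.erase_ssubset hc) ⟨?_, ?_, ?_⟩
        · obtain ⟨j, -, -, hj⟩ := hr c hc
          exact ⟨_, Finset.mem_erase.2 ⟨by simp, hj⟩⟩
        · intro d hd
          obtain ⟨j, h1, h2, hj⟩ := hl d (Finset.mem_of_mem_erase hd)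
          refine ⟨j, h1, h2, Finset.mem_erase.2 ⟨?_, hj⟩⟩
          intro he
          refine hcn j h1 (Sum.inr.inj he) ?_
          rw [h2]; exact Finset.mem_of_mem_erase hd
        · intro c' hc'
          obtain ⟨j, h1, h2, hj⟩ := hr c' (Finset.mem_of_mem_erase hc')
          exact ⟨j, h1, h2, Finset.mem_erase.2 ⟨by simp, hj⟩⟩

/-- the components still occupied by `C` -/
def MZ.stuck (z : MZ Φ Ψ) : Finset (Fin Φ.k ⊕ Fin Ψ.k) :=
  Finset.univ.filter (fun e => Sum.elim z.Xv z.Yv e = true)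

theorem stuck_lt (z z' : MZ Φ Ψ) (h : DStep z z') : z'.stuck ⊂ z.stuck := by
  cases h with
  | alphaStep i hi hg hh hX hY =>
    rw [Finset.ssubset_iff_of_subset]
    · exact ⟨.inl i, by simp [MZ.stuck, hi], fun h => by
        have h' := (Finset.mem_filter.1 h).2
        rw [Sum.elim_inl, hX, Function.update_self] at h'
        exact Bool.noConfusion h'⟩
    · rintro (c | d)
      · simp only [MZ.stuck, hX, Finset.mem_filter, Finset.mem_univ, true_and, Sum.elim_inl,
          Function.update_apply]
        split_ifs <;> simp
      · simp [MZ.stuck, hY]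
  | betaStep i hi hg hh hX hY =>
    rw [Finset.ssubset_iff_of_subset]
    · exact ⟨.inr i, by simp [MZ.stuck, hi], fun h => by
        have h' := (Finset.mem_filter.1 h).2
        rw [Sum.elim_inr, hX, Function.update_self] at h'
        exact Bool.noConfusion h'⟩
    · rintro (c | d)
      · simp [MZ.stuck, hY]
      · simp only [MZ.stuck, hX, Finset.mem_filter, Finset.mem_univ, true_and, Sum.elim_inr,
          Function.update_apply]
        split_ifs <;> simp

theorem exists_normal (z : MZ Φ Ψ) : ∃ z', Relation.ReflTransGen DStep z z' ∧ DNormal z' := by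
  induction hs : z.stuck using Finset.strongInduction generalizing z with
  | H K ih =>
    subst hs
    by_cases h : DNormal z
    · exact ⟨z, .refl, h⟩
    · obtain ⟨z', hz'⟩ := not_not.1 h
      obtain ⟨w, hw, hn⟩ := ih _ (stuck_lt z z' hz') z' rfl
      exact ⟨w, .head hz' hw, hn⟩

theorem blocked_of_normal (z : MZ Φ Ψ) (hz : DNormal z) (hne : z ≠ cfnatRHS Φ Ψ) :
    Blocked Φ Ψ z.stuck := by
  refine ⟨?_, ?_, ?_⟩
  · by_contra hempty
    rw [Finset.not_nonempty_iff_eq_empty] at hempty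
    apply hne
    have h1 : ∀ e, e ∉ z.stuck := by simp [hempty]
    have hX : z.Xv = fun _ => false := by
      funext c; simpa [MZ.stuck] using h1 (.inl c)
    have hY : z.Yv = fun _ => false := by
      funext c; simpa [MZ.stuck] using h1 (.inr c)
    obtain ⟨X, Y, cz⟩ := z
    simp only at hX hY
    subst hX hY
    rfl
  · intro c hc
    have hc : z.Xv c = true := by simpa [MZ.stuck] using hc
    by_contra hcon
    push Not at hcon
    have hcon' : ∀ j, sy j = false → Φ.πR j = c → z.Yv (Ψ.πL j) = false := by
      intro j h1 h2
      simpa [MZ.stuck] using hcon j h1 h2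
    apply hz
    refine ⟨⟨Function.update z.Xv c false, z.Yv, ?_⟩, .alphaStep _ _ c hc ?_ ?_ rfl rfl⟩
    · intro j
      have h1 := z.compat j
      have h2 := hcon' j
      by_cases hj : Φ.πR j = c
      · simp only [hj, Function.update_self]
        refine ⟨by simp, fun h => by simp [h2 h hj]⟩
      · simpa [Function.update_of_ne hj] using h1
    · intro j h1 h2; simp [MZ.g, h1, h2, hc]
    · intro j h1 h2; simp [MZ.h, h1, h2, hc, hcon' j h1 h2]
  · intro c hc
    have hc : z.Yv c = true := by simpa [MZ.stuck] using hc
    by_contra hcon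
    push Not at hcon
    have hcon' : ∀ j, sy j = true → Ψ.πL j = c → z.Xv (Φ.πR j) = false := by
      intro j h1 h2
      simpa [MZ.stuck] using hcon j h1 h2
    apply hz
    refine ⟨⟨z.Xv, Function.update z.Yv c false, ?_⟩, .betaStep _ _ c hc ?_ ?_ rfl rfl⟩
    · intro j
      have h1 := z.compat j
      have h2 := hcon' j
      by_cases hj : Ψ.πL j = c
      · simp only [hj, Function.update_self]
        refine ⟨fun h => by simp [h2 h hj], by simp⟩
      · simpa [Function.update_of_ne hj] using h1
    · intro j h1 h2; simp [MZ.h, h1, h2, hc, hcon' j h1 h2]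
    · intro j h1 h2; simp [MZ.t, h1, h2, hc]

/-! ### The countermodel -/

/-- Objects of the countermodel category: the product of the arrow category with the
multiplicative monoid `{0, 1}`. -/
structure Cex : Type u where
  bit : ULift.{u} Bool

structure CexHom (a b : Cex.{u}) : Type v where
  val : ULift.{v} Bool
  le : a.bit.down ≤ b.bit.down

@[ext] theorem CexHom.ext' {a b : Cex.{u}} {f g : CexHom.{u, v} a b}
    (h : f.val.down = g.val.down) : f = g := by
  obtain ⟨⟨x⟩, _⟩ := f
  obtain ⟨⟨y⟩, _⟩ := g
  simp only at h
  subst h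
  rfl

instance : Category.{v} Cex.{u} where
  Hom a b := CexHom.{u, v} a b
  id a := ⟨⟨true⟩, le_rfl⟩
  comp f g := ⟨⟨f.val.down && g.val.down⟩, f.le.trans g.le⟩
  id_comp f := by apply CexHom.ext'; simp
  comp_id f := by apply CexHom.ext'; simp
  assoc f g h := by apply CexHom.ext'; simp [Bool.and_assoc]

def wt {a b : Cex.{u}} (f : a ⟶ b) : Bool := (show CexHom.{u, v} a b from f).val.down

theorem wt_ext {a b : Cex.{u}} {f g : a ⟶ b} (h : wt.{u, v} f = wt g) : f = g :=
  CexHom.ext' h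

theorem wt_comp {a b c : Cex.{u}} (f : a ⟶ b) (g : b ⟶ c) :
    wt.{u, v} (f ≫ g) = (wt f && wt g) := rfl

theorem wt_id (a : Cex.{u}) : wt.{u, v} (𝟙 a) = true := rfl

theorem wt_eqToHom {a b : Cex.{u}} (h : a = b) : wt.{u, v} (eqToHom h) = true := by
  subst h; rfl

theorem hom_le {a b : Cex.{u}} (f : (a ⟶ b : Type v)) : a.bit.down ≤ b.bit.down :=
  CexHom.le f

def vval : (b : Bool) → VarCat.{u, v} Cex.{u} b → Bool
  | true, X => Cex.bit X |>.down
  | false, X => Cex.bit (Opposite.unop X) |>.down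

theorem vval_mono : (b : Bool) → {X Y : VarCat.{u, v} Cex.{u} b} → (X ⟶ Y) →
    jle b (vval b X) (vval b Y)
  | true, _, _, f => hom_le.{u, v} f
  | false, _, _, f => hom_le.{u, v} (Quiver.Hom.unop f)

theorem vval_pair (b : Bool) (P N : Cex.{u}) :
    vval.{u, v} b (pairObj b P N) = if b then P.bit.down else N.bit.down := by
  cases b <;> rfl

theorem vval_hex (s : ι → Bool) (pl : ι → Fin k) (c : Fin k) (A : Fin k → Cex.{u})
    (P N : Cex.{u}) (i : ι) :
    vval.{u, v} (s i) (hexObj s pl c A P N i) =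
      if pl i = c then (if s i then P.bit.down else N.bit.down) else (A (pl i)).bit.down := by
  unfold hexObj
  split_ifs <;> simp_all [vval_pair]

open Classical in
/-- The functor which is `1` on morphisms fixing the objects at the places in `N` and
`0` on the others. -/
noncomputable def cexG (s : ι → Bool) (N : ι → Prop) :
    (∀ i : ι, VarCat.{u, v} Cex.{u} (s i)) ⥤ Cex.{u} where
  obj _ := ⟨⟨false⟩⟩
  map {X Y} _ := (⟨⟨decide (∀ j, N j → vval (s j) (X j) = vval (s j) (Y j))⟩, le_rfl⟩ :
    CexHom.{u, v} _ _)
  map_id X := by apply CexHom.ext'; simp; rfl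
  map_comp {X Y Z} φ ψ := by
    apply CexHom.ext'
    change decide _ = (decide _ && decide _)
    rw [Bool.eq_iff_iff, Bool.and_eq_true, decide_eq_true_iff, decide_eq_true_iff,
      decide_eq_true_iff]
    constructor
    · intro h
      have : ∀ j, N j → vval (s j) (X j) = vval (s j) (Y j) ∧
          vval (s j) (Y j) = vval (s j) (Z j) := by
        intro j hj
        have h1 := vval_mono (s j) (φ j)
        have h2 := vval_mono (s j) (ψ j)
        have h3 := h j hj
        revert h1 h2 h3
        generalize vval (s j) (X j) = x
        generalize vval (s j) (Y j) = y
        generalize vval (s j) (Z j) = z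
        generalize s j = b
        cases b <;> cases x <;> cases y <;> cases z <;> simp [jle]
      exact ⟨fun j hj => (this j hj).1, fun j hj => (this j hj).2⟩
    · rintro ⟨h1, h2⟩ j hj
      exact (h1 j hj).trans (h2 j hj)

open Classical in
theorem wt_cexG (s : ι → Bool) (N : ι → Prop) {X Y : ∀ i : ι, VarCat.{u, v} Cex.{u} (s i)}
    (φ : X ⟶ Y) : wt.{u, v} ((cexG.{u, v} s N).map φ) =
      decide (∀ j, N j → vval.{u, v} (s j) (X j) = vval.{u, v} (s j) (Y j)) := rfl

open Classical in
theorem wt_hex_eq (s : ι → Bool) (N : ι → Prop) (pl : ι → Fin k) (c : Fin k)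
    (A : Fin k → Cex.{u}) {P P' N₁ N₁' : Cex.{u}} (u₁ : P ⟶ P') (v₁ : N₁' ⟶ N₁) :
    wt.{u, v} ((cexG.{u, v} s N).map (hexHom s pl c A u₁ v₁)) = true ↔
      ∀ j, N j → pl j = c →
        (if s j then P.bit.down = P'.bit.down else N₁.bit.down = N₁'.bit.down) := by
  rw [wt_cexG, decide_eq_true_iff]
  refine forall_congr' fun j => forall_congr' fun _ => ?_
  rw [vval_hex, vval_hex]
  by_cases h : pl j = c <;> cases s j <;> simp [h]

/-- the argument places joining two elements of `K` -/
def inner (Φ : GGraph m n gΦ sx sy) (Ψ : GGraph n p gΨ sy sz)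
    (K : Finset (Fin Φ.k ⊕ Fin Ψ.k)) (j : Fin n) : Prop :=
  .inl (Φ.πR j) ∈ K ∧ .inr (Ψ.πL j) ∈ K

open Classical in
noncomputable def cexδ (Φ : GGraph m n gΦ sx sy) (Ψ : GGraph n p gΨ sy sz)
    (K : Finset (Fin Φ.k ⊕ Fin Ψ.k)) (A : Fin Ψ.k → Cex.{u}) :
    ((⟨⟨false⟩⟩ : Cex.{u}) ⟶ (⟨⟨false⟩⟩ : Cex.{u}) : Type v) :=
  (⟨⟨decide (∃ d, .inr d ∈ K ∧ (A d).bit.down = false)⟩, le_rfl⟩ : CexHom.{u, v} _ _)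

open Classical in
theorem wt_cexδ (K : Finset (Fin Φ.k ⊕ Fin Ψ.k)) (A : Fin Ψ.k → Cex.{u}) :
    wt.{u, v} (cexδ.{u, v} Φ Ψ K A) = decide (∃ d, .inr d ∈ K ∧ (A d).bit.down = false) := rfl

theorem wt_const {J : Type*} [Category J] {X Y : J} (f : X ⟶ Y) (a : Cex.{u}) :
    wt.{u, v} (((Functor.const J).obj a).map f) = true := rfl

theorem wt5 {a b c d e g : Cex.{u}} (f₁ : a ⟶ b) (f₂ : b ⟶ c) (f₃ : c ⟶ d) (f₄ : d ⟶ e)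
    (f₅ : e ⟶ g) (h₂ : wt.{u, v} f₂ = true) (h₄ : wt.{u, v} f₄ = true) :
    wt.{u, v} (f₁ ≫ f₂ ≫ f₃ ≫ f₄ ≫ f₅) = (wt f₁ && (wt f₃ && wt f₅)) := by
  rw [wt_comp, wt_comp, wt_comp, wt_comp, h₂, h₄, Bool.true_and, Bool.true_and]

theorem not_provides (K : Finset (Fin Φ.k ⊕ Fin Ψ.k)) (hK : Blocked Φ Ψ K)
    (hK' : Blocking Φ Ψ K) : ¬ Provides.{u, v} Φ Ψ := by
  intro hP
  have := hP (B := Cex.{u}) ((Functor.const _).obj ⟨⟨false⟩⟩) (cexG.{u, v} sy (inner Φ Ψ K))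
    ((Functor.const _).obj ⟨⟨false⟩⟩) (fun _ => 𝟙 (⟨⟨false⟩⟩ : Cex.{u}))
    (fun A => cexδ.{u, v} Φ Ψ K A) ?_ ?_
  · have h := congrArg wt.{u, v}
      (this (⟨⟨false⟩⟩ : Cex.{u}) ⟨⟨true⟩⟩ (⟨⟨true⟩, by simp⟩ : CexHom.{u, v} _ _))
    change (true && ((true && wt (cexδ.{u, v} Φ Ψ K _)) && true)) =
      (true && ((true && wt (cexδ.{u, v} Φ Ψ K _)) && true)) at h
    rw [wt_cexδ, wt_cexδ] at h
    obtain ⟨⟨e, he⟩, hl, hr⟩ := hK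
    have : ∃ d, .inr d ∈ K := by
      rcases e with c | d
      · obtain ⟨j, -, -, hj⟩ := hl c he
        exact ⟨_, hj⟩
      · exact ⟨d, he⟩
    simp [this] at h
  · intro c A P Q f
    apply wt_ext.{u, v}
    refine (wt5 _ _ _ _ _ (wt_eqToHom _) (wt_eqToHom _)).trans
      (Eq.trans ?_ (wt5 _ _ _ _ _ (wt_eqToHom _) (wt_eqToHom _)).symm)
    change (true && (true && wt ((cexG.{u, v} sy (inner Φ Ψ K)).map _))) =
      (true && (true && wt ((cexG.{u, v} sy (inner Φ Ψ K)).map _)))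
    simp only [Bool.true_and]
    rw [Bool.eq_iff_iff, wt_hex_eq, wt_hex_eq]
    by_cases hPQ : P.bit.down = Q.bit.down
    · simp [hPQ]
    · by_cases hc : Sum.inl c ∈ K
      · obtain ⟨j, h1, h2, h3⟩ := hK.2.1 c hc
        obtain ⟨j', h1', h2', h3'⟩ := hK'.1 c hc
        constructor
        · intro h
          have := h j ⟨by rwa [h2], h3⟩ h2
          simp [h1] at this
          exact (hPQ (congrArg ULift.down this.symm)).elim
        · intro h
          have := h j' ⟨by rwa [h2'], h3'⟩ h2'
          simp [h1'] at this
          exact (hPQ (congrArg ULift.down this)).elim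
      · constructor <;>
        · intro _ j hj hjc
          exact absurd (hjc ▸ hj.1) hc
  · intro c A P Q f
    apply wt_ext.{u, v}
    refine (wt5 _ _ _ _ _ (wt_eqToHom _) (wt_eqToHom _)).trans
      (Eq.trans ?_ (wt5 _ _ _ _ _ (wt_eqToHom _) (wt_eqToHom _)).symm)
    change (wt ((cexG.{u, v} sy (inner Φ Ψ K)).map _) &&
        (wt (cexδ.{u, v} Φ Ψ K (updF A c Q)) && true)) =
      (wt ((cexG.{u, v} sy (inner Φ Ψ K)).map _) &&
        (wt (cexδ.{u, v} Φ Ψ K (updF A c P)) && true))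
    simp only [Bool.and_true]
    rw [Bool.eq_iff_iff, Bool.and_eq_true, Bool.and_eq_true, wt_hex_eq, wt_hex_eq]
    have hδ : P.bit.down = Q.bit.down ∨ Sum.inr c ∉ K →
        wt (cexδ.{u, v} Φ Ψ K (updF A c Q)) = wt (cexδ.{u, v} Φ Ψ K (updF A c P)) := by
      intro h
      rw [wt_cexδ, wt_cexδ, Bool.eq_iff_iff, decide_eq_true_iff, decide_eq_true_iff]
      refine exists_congr fun d => and_congr_right fun hd => ?_
      unfold updF
      by_cases hdc : d = c
      · subst hdc
        rcases h with h | h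
        · simp [h]
        · exact absurd hd h
      · simp [hdc]
    by_cases hPQ : P.bit.down = Q.bit.down
    · rw [hδ (.inl hPQ)]; simp [hPQ]
    · by_cases hc : Sum.inr c ∈ K
      · obtain ⟨j, h1, h2, h3⟩ := hK.2.2 c hc
        obtain ⟨j', h1', h2', h3'⟩ := hK'.2 c hc
        constructor
        · rintro ⟨h, -⟩
          have := h j ⟨h3, by rwa [h2]⟩ h2
          simp [h1] at this
          exact (hPQ (congrArg ULift.down this)).elim
        · rintro ⟨h, -⟩
          have := h j' ⟨h3', by rwa [h2']⟩ h2'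
          simp [h1'] at this
          exact (hPQ (congrArg ULift.down this.symm)).elim
      · rw [hδ (.inr hc)]
        refine and_congr_left fun _ => ?_
        constructor <;>
        · intro _ j hj hjc
          exact absurd (hjc ▸ hj.2) hc

theorem reduces_of_provides (h : Provides.{u, v} Φ Ψ) :
    Relation.ReflTransGen (DStep (Φ := Φ) (Ψ := Ψ)) (cfnatLHS Φ Ψ) (cfnatRHS Φ Ψ) := by
  obtain ⟨z, hz, hn⟩ := exists_normal (cfnatLHS Φ Ψ)
  by_cases he : z = cfnatRHS Φ Ψ
  · rwa [he] at hz
  · obtain ⟨K, hK, hK'⟩ := exists_blocking _ (blocked_of_normal z hn he)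
    exact (not_provides.{u, v} K hK hK' h).elim

theorem comp_cancel_id {B : Type u} [Category.{v} B] {X₀ X₁ X₂ X₃ X₄ : B} (a : X₀ ⟶ X₁)
    (b : X₁ ⟶ X₂) (c : X₂ ⟶ X₃) (i : X₃ ⟶ X₃) (hi : i = 𝟙 X₃) (t : X₃ ⟶ X₄) :
    a ≫ b ≫ c ≫ i ≫ t = a ≫ b ≫ c ≫ t := by
  rw [hi, Category.id_comp]

theorem provides_of_reduces
    (h : Relation.ReflTransGen (DStep (Φ := Φ) (Ψ := Ψ)) (cfnatLHS Φ Ψ) (cfnatRHS Φ Ψ)) :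
    Provides.{u, v} Φ Ψ := by
  intro B _ F G H γ δ hγ hδ P Q f
  have key : (cfnatLHS Φ Ψ).interp F G H γ δ f = (cfnatRHS Φ Ψ).interp F G H γ δ f := by
    generalize cfnatRHS Φ Ψ = w at h
    induction h with
    | refl => rfl
    | tail _ h2 ih => exact ih.trans (interp_step F G H γ δ hγ hδ f _ _ h2)
  have eX : (fun i => !sx i) = fun i => if sx i then false else true := by
    funext i; cases sx i <;> rfl
  have eZ : sz = fun i => if sz i then true else false := by
    funext i; cases sz i <;> rfl
  have x1 := tupHom_eq f sx false true true true (by decide) (by decide) (fun i => !sx i)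
    (fun _ => true) eX (by simp) (cfnatLHS Φ Ψ).jle_x (tupObj_eq P Q sx _ _ _ eX) rfl
  have x0 := tupHom_eq f sx false true false false (by decide) (by decide) (fun i => !sx i)
    (fun _ => false) eX (by simp) (cfnatRHS Φ Ψ).jle_x (tupObj_eq P Q sx _ _ _ eX) rfl
  have z1 := tupHom_eq f sz true true true false (by decide) (by decide) (fun _ => true) sz
    (by simp) eZ (cfnatLHS Φ Ψ).jle_z rfl (tupObj_eq P Q sz _ _ _ eZ).symm
  have z0 := tupHom_eq f sz false false true false (by decide) (by decide) (fun _ => false) sz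
    (by simp) eZ (cfnatRHS Φ Ψ).jle_z rfl (tupObj_eq P Q sz _ _ _ eZ).symm
  have k2 := congrArg (fun t => F.map (eqToHom (tupObj_eq P Q sx _ _ _ eX)) ≫ t ≫
    H.map (eqToHom (tupObj_eq P Q sz _ _ _ eZ).symm)) key
  unfold MZ.interp at k2
  have g1 : Jhom f sy (fun j => (cfnatLHS Φ Ψ).Xv (Φ.πR j))
    (fun j => (cfnatLHS Φ Ψ).Yv (Ψ.πL j)) (cfnatLHS Φ Ψ).jle_y = 𝟙 _ := Jhom_refl f sy _ _
  have g0 : Jhom f sy (fun j => (cfnatRHS Φ Ψ).Xv (Φ.πR j))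
    (fun j => (cfnatRHS Φ Ψ).Yv (Ψ.πL j)) (cfnatRHS Φ Ψ).jle_y = 𝟙 _ := Jhom_refl f sy _ _
  rw [g1, g0] at k2
  change F.map (tupHom sx (vm f false true (by decide)) (vm f true true (by decide))) ≫ _ ≫
    H.map (tupHom sz (vm f true true (by decide)) (vm f false true (by decide))) =
    F.map (tupHom sx (vm f false false (by decide)) (vm f false true (by decide))) ≫ _ ≫
    H.map (tupHom sz (vm f false true (by decide)) (vm f false false (by decide)))
  rw [x1, x0, z1, z0]
  simp only [eqToHom_refl, Category.comp_id, Category.id_comp, Functor.map_comp,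
    Category.assoc] at k2 ⊢
  exact ((comp_cancel_id _ _ _ (G.map (𝟙 _)) (G.map_id _) _).symm.trans k2).trans
    (comp_cancel_id _ _ _ (G.map (𝟙 _)) (G.map_id _) _)

end Reduces

section Nat7
variable {m n p gΦ gΨ : ℕ} {sx : Fin m → Bool} {sy : Fin n → Bool} {sz : Fin p → Bool}
variable (Φ : GGraph m n gΦ sx sy) (Ψ : GGraph n p gΨ sy sz)

/-- Corollary to Theorem 2.1 of the paper, together with the
discussion of `(cfnat)`.  The property `P(Φ,Ψ)` — that the single-component
amalgamation `Φ+Ψ` provides g-dinaturality — is decidable; it holds if and only if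
the left-hand side of the equation `(cfnat)` reduces by `D` reduction to its
right-hand side.  (The latter condition is manifestly decidable: `D` reduction is a
strongly normalizing, effectively computable rewriting on the finitely many terms of
`ℳ₀`.) -/
theorem provides_iff_D_reduces
    (hconn : AmalgConnected Φ Ψ) :
    Provides.{u, v} Φ Ψ ↔
      Relation.ReflTransGen (DStep (Φ := Φ) (Ψ := Ψ)) (cfnatLHS Φ Ψ) (cfnatRHS Φ Ψ) := by
  exact ⟨reduces_of_provides, provides_of_reduces⟩

end Nat7
end GDin
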